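/- For a submodular set function F : 2^V → ℝ with F(∅) = 0 and Lovász extension f, the minimum of F over subsets of V equals the minimum of f over {0,1}^N and equals the minimum of f over [0,1]^N. -/

import Mathlib

/-!
Write `m` for the minimum of `F`, so `m ≤ F ∅ = 0`. For `x ∈ [0,1]^N` with smallest coordinate `a`
and largest coordinate `b`, replacing every value of `F` in the level-set formula by `m` gives
`lovasz F x ≥ a * m + (b - a) * m = b * m ≥ m`, since `b ≤ 1` and `m ≤ 0` (`iInf_le_lovasz`).
Conversely every value `F S` is attained at a vertex of the cube, because
`lovasz F (S.indicator 1) = F S` (`lovasz_indicator`). Both infima of `lovasz F` therefore equal `m`.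
-/

open scoped Classical
open MeasureTheory

/-- The Lovász extension of a set function `F` (with `F ∅ = 0`), defined equivalently to the
sorted telescoping sum via the level-set integral formula. -/
noncomputable def lovasz {α : Type*} [Fintype α] (F : Set α → ℝ) (x : α → ℝ) : ℝ :=
  (⨅ i, x i) * F Set.univ +
    ∫ t in Set.Ioc (⨅ i, x i) (⨆ i, x i), F {i | t < x i}

/-- `F(S₁) + F(S₂) ≥ F(S₁ ∪ S₂) + F(S₁ ∩ S₂)`. -/
def Submodular {α : Type*} (F : Set α → ℝ) : Prop :=
  ∀ A B : Set α, F (A ∪ B) + F (A ∩ B) ≤ F A + F B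

theorem measurable_levelSet {N : ℕ} (F : Set (Fin N) → ℝ) (x : Fin N → ℝ) :
    Measurable fun t : ℝ => F {i | t < x i} := by
  have h : Measurable fun t : ℝ => {i | t < x i} :=
    measurable_set_iff.2 fun i => measurableSet_setOfPred.1 measurableSet_Iio
  have hF : Measurable F := measurable_of_countable F
  exact hF.comp h

theorem integrableOn_levelSet {N : ℕ} (F : Set (Fin N) → ℝ) (x : Fin N → ℝ) (a b : ℝ) :
    IntegrableOn (fun t : ℝ => F {i | t < x i}) (Set.Ioc a b) := by
  obtain ⟨C, hC⟩ := (Set.finite_range fun S => ‖F S‖).bddAbove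
  exact Measure.integrableOn_of_bounded (M := C) (by simp)
    (measurable_levelSet F x).aestronglyMeasurable
    (Filter.Eventually.of_forall fun t => hC ⟨_, rfl⟩)

theorem iInf_le_lovasz {N : ℕ} (F : Set (Fin N) → ℝ) (hF0 : F ∅ = 0) (x : Fin N → ℝ)
    (hx : ∀ i, x i ∈ Set.Icc (0 : ℝ) 1) : (⨅ S, F S) ≤ lovasz F x := by
  have hm : ∀ S, (⨅ S, F S) ≤ F S := ciInf_le (Set.finite_range F).bddBelow
  have ha : 0 ≤ ⨅ i, x i := Real.iInf_nonneg fun i => (hx i).1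
  have hb : (⨆ i, x i) ≤ 1 := Real.iSup_le (fun i => (hx i).2) zero_le_one
  have hab : (⨅ i, x i) ≤ ⨆ i, x i := by
    -- For `N = 0` both sides take the default value `0`.
    rcases isEmpty_or_nonempty (Fin N) with h | h
    · simp
    · exact ciInf_le_ciSup (Set.finite_range x).bddBelow (Set.finite_range x).bddAbove
  unfold lovasz
  generalize (⨅ i, x i) = a at *
  generalize (⨆ i, x i) = b at *
  generalize (⨅ S, F S) = m at *
  have hint : (b - a) * m ≤ ∫ t in Set.Ioc a b, F {i | t < x i} := by
    have h := setIntegral_mono (μ := volume) (s := Set.Ioc a b) (f := fun _ => m)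
      (integrableOn_const (by simp)) (integrableOn_levelSet F x a b) fun t => hm _
    simpa [hab] using h
  have hm0 : m ≤ 0 := hF0 ▸ hm ∅
  nlinarith [mul_le_mul_of_nonneg_left (hm Set.univ) ha,
    mul_nonneg (sub_nonneg.2 hb) (neg_nonneg.2 hm0)]

theorem lovasz_indicator {N : ℕ} (F : Set (Fin N) → ℝ) (hF0 : F ∅ = 0) (S : Set (Fin N)) :
    lovasz F (S.indicator 1) = F S := by
  rcases S.eq_empty_or_nonempty with rfl | ⟨j, hj⟩
  · simp [lovasz, hF0]
  have : Nonempty (Fin N) := ⟨j⟩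
  have hsup : (⨆ i, S.indicator (1 : Fin N → ℝ) i) = 1 := by
    refine le_antisymm (ciSup_le fun i => ?_) ?_
    · by_cases h : i ∈ S <;> simp [h]
    · exact le_ciSup_of_le (Set.finite_range _).bddAbove j (by simp [hj])
  by_cases hS : S = Set.univ
  · subst hS
    simp [lovasz]
  obtain ⟨k, hk⟩ := (Set.ne_univ_iff_exists_notMem S).1 hS
  have hinf : (⨅ i, S.indicator (1 : Fin N → ℝ) i) = 0 := by
    refine le_antisymm ?_ (Real.iInf_nonneg fun i => ?_)
    · exact ciInf_le_of_le (Set.finite_range _).bddBelow k (by simp [hk])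
    · by_cases h : i ∈ S <;> simp [h]
  -- The level set at `t = 1` is empty instead of `S`, so the right endpoint is discarded.
  rw [lovasz, hsup, hinf, integral_Ioc_eq_integral_Ioo,
    setIntegral_congr_fun (g := fun _ => F S) measurableSet_Ioo]
  · simp
  · intro t ht
    have h : {i | t < S.indicator (1 : Fin N → ℝ) i} = S := by
      ext i
      by_cases h : i ∈ S <;> simp [h, ht.2, ht.1.le]
    simp only [h]

/-- Any set of points of the cube containing all its vertices gives the same minimum as `F`. -/
theorem iInf_eq_iInf_lovasz {N : ℕ} (F : Set (Fin N) → ℝ) (hF0 : F ∅ = 0)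
    (p : (Fin N → ℝ) → Prop) (hp : ∀ S : Set (Fin N), p (S.indicator 1))
    (hp' : ∀ x, p x → ∀ i, x i ∈ Set.Icc (0 : ℝ) 1) :
    (⨅ S, F S) = ⨅ x : {x : Fin N → ℝ // p x}, lovasz F x.1 := by
  have : Nonempty {x : Fin N → ℝ // p x} := ⟨⟨_, hp ∅⟩⟩
  have hle : ∀ x : {x : Fin N → ℝ // p x}, (⨅ S, F S) ≤ lovasz F x.1 :=
    fun x => iInf_le_lovasz F hF0 x.1 (hp' x.1 x.2)
  refine le_antisymm (le_ciInf hle) (le_ciInf fun S => ?_)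
  exact ciInf_le_of_le ⟨_, Set.forall_mem_range.2 hle⟩ ⟨_, hp S⟩ (lovasz_indicator F hF0 S).le

/-- For a submodular `F` with `F ∅ = 0`, the minimum of `F` over subsets equals the minimum of
its Lovász extension over `{0,1}^N` and over `[0,1]^N`. -/
theorem stmt_11 {N : ℕ} (F : Set (Fin N) → ℝ) (hF : Submodular F) (hF0 : F ∅ = 0) :
    (⨅ S : Set (Fin N), F S)
      = (⨅ x : {x : Fin N → ℝ // ∀ i, x i = 0 ∨ x i = 1}, lovasz F x.1) ∧
    (⨅ S : Set (Fin N), F S)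
      = ⨅ x : {x : Fin N → ℝ // ∀ i, x i ∈ Set.Icc (0 : ℝ) 1}, lovasz F x.1 := by
  refine ⟨iInf_eq_iInf_lovasz F hF0 (fun x => ∀ i, x i = 0 ∨ x i = 1) (fun S i => ?_)
      (fun x hx i => ?_),
    iInf_eq_iInf_lovasz F hF0 (fun x => ∀ i, x i ∈ Set.Icc (0 : ℝ) 1) (fun S i => ?_)
      fun x hx => hx⟩
  · by_cases h : i ∈ S <;> simp [h]
  · rcases hx i with h | h <;> simp [h]
  · by_cases h : i ∈ S <;> simp [h]
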